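/- Characterization of harmonic Gauss map: in the setting of a minimal Lorentzian surface x(s,t) = α(s) + β(t) in null coordinates, for every point (s,t) one has ∂²ν/∂s∂t (s,t) = 0 if and only if both B(η₁(s,t), η₂(s,t)) = 0 and η₁(s,t) ∧ η₂(s,t) = 0 in Λ²(ℝ⁴). (That is, the Gauss map is harmonic, Δν = 0, exactly when the Gaussian curvature K = B(η₁,η₂)/m⁴ and the normal curvature both vanish.) -/

import Mathlib

noncomputable section

/-- The Minkowski bilinear form on `ℝ⁴ = Fin 4 → ℝ`:
`B(v,w) = -v₀w₀ + v₁w₁ + v₂w₂ + v₃w₃`. -/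
def B4 (v w : Fin 4 → ℝ) : ℝ :=
  -(v 0 * w 0) + v 1 * w 1 + v 2 * w 2 + v 3 * w 3

/-- The wedge product `v ∧ w`, modelled concretely as the antisymmetric array
`(i,j) ↦ vᵢwⱼ - vⱼwᵢ` (a faithful model of the second exterior power `Λ²(ℝ⁴)`). -/
def wedge (v w : Fin 4 → ℝ) : Fin 4 → Fin 4 → ℝ :=
  fun i j => v i * w j - v j * w i

/-- Partial derivative of a two-parameter map with respect to the first variable. -/
def pds {E : Type*} [NormedAddCommGroup E] [NormedSpace ℝ E]
    (x : ℝ → ℝ → E) (s t : ℝ) : E :=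
  deriv (fun u => x u t) s

/-- Partial derivative of a two-parameter map with respect to the second variable. -/
def pdt {E : Type*} [NormedAddCommGroup E] [NormedSpace ℝ E]
    (x : ℝ → ℝ → E) (s t : ℝ) : E :=
  deriv (fun u => x s u) t

/-- `m²(s,t) = -B(α'(s), β'(t))`, the conformal factor of the induced metric
`-m²(ds⊗dt + dt⊗ds)` of the minimal Lorentzian surface `x(s,t) = α(s) + β(t)`. -/
def msq (α β : ℝ → Fin 4 → ℝ) (s t : ℝ) : ℝ :=
  -B4 (deriv α s) (deriv β t)

/-- `η₁ = h(∂s,∂s)`: the component of `x_{ss} = α''` orthogonal to the tangent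
plane `span{α'(s), β'(t)}`. -/
def eta1 (α β : ℝ → Fin 4 → ℝ) (s t : ℝ) : Fin 4 → ℝ :=
  deriv (deriv α) s
    - (B4 (deriv (deriv α) s) (deriv β t) / B4 (deriv α s) (deriv β t)) • deriv α s

/-- `η₂ = h(∂t,∂t)`: the component of `x_{tt} = β''` orthogonal to the tangent
plane `span{α'(s), β'(t)}`. -/
def eta2 (α β : ℝ → Fin 4 → ℝ) (s t : ℝ) : Fin 4 → ℝ :=
  deriv (deriv β) t
    - (B4 (deriv (deriv β) t) (deriv α s) / B4 (deriv α s) (deriv β t)) • deriv β t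

/-- The Gauss map `ν = (1/m²)·(α'(s) ∧ β'(t))`, valued in (a model of) `Λ²(ℝ⁴)`. -/
def gaussMap (α β : ℝ → Fin 4 → ℝ) (s t : ℝ) : Fin 4 → Fin 4 → ℝ :=
  (1 / msq α β s t) • wedge (deriv α s) (deriv β t)

/-- The Laplace–Beltrami operator of the induced metric `-m²(ds⊗dt + dt⊗ds)`
(with the sign convention of the paper) acting on `Λ²(ℝ⁴)`-valued maps:
`Δξ = (2/m²)·∂²ξ/∂s∂t`. -/
def lap (α β : ℝ → Fin 4 → ℝ) (ξ : ℝ → ℝ → (Fin 4 → Fin 4 → ℝ)) (s t : ℝ) :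
    Fin 4 → Fin 4 → ℝ :=
  (2 / msq α β s t) • pds (pdt ξ) s t

lemma hasDerivAt_B4 {f g : ℝ → Fin 4 → ℝ} {f' g' : Fin 4 → ℝ} {x : ℝ}
    (hf : HasDerivAt f f' x) (hg : HasDerivAt g g' x) :
    HasDerivAt (fun u => B4 (f u) (g u)) (B4 f' (g x) + B4 (f x) g') x := by
  have F := hasDerivAt_pi.1 hf
  have G := hasDerivAt_pi.1 hg
  unfold B4
  refine (((((F 0).mul (G 0)).neg.add ((F 1).mul (G 1))).add ((F 2).mul (G 2))).add
    ((F 3).mul (G 3))).congr_deriv ?_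
  ring

lemma hasDerivAt_wedge {f g : ℝ → Fin 4 → ℝ} {f' g' : Fin 4 → ℝ} {x : ℝ}
    (hf : HasDerivAt f f' x) (hg : HasDerivAt g g' x) :
    HasDerivAt (fun u => wedge (f u) (g u)) (wedge f' (g x) + wedge (f x) g') x := by
  have F := hasDerivAt_pi.1 hf
  have G := hasDerivAt_pi.1 hg
  refine hasDerivAt_pi.2 fun i => hasDerivAt_pi.2 fun j => ?_
  unfold wedge
  refine (((F i).mul (G j)).sub ((F j).mul (G i))).congr_deriv ?_
  simp only [Pi.add_apply]
  ring

lemma hasDerivAt_deriv_of {I : Set ℝ} (hI : IsOpen I) {f : ℝ → Fin 4 → ℝ}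
    (hf : ContDiffOn ℝ (⊤ : ℕ∞) f I) {x : ℝ} (hx : x ∈ I) :
    HasDerivAt (deriv f) (deriv (deriv f) x) x := by
  have h1 : ContDiffOn ℝ 1 (deriv f) I := hf.deriv_of_isOpen hI (by norm_cast)
  exact ((h1.differentiableOn (by norm_num)).differentiableAt (hI.mem_nhds hx)).hasDerivAt

lemma B4_zero_left (w : Fin 4 → ℝ) : B4 0 w = 0 := by simp [B4]
lemma B4_zero_right (w : Fin 4 → ℝ) : B4 w 0 = 0 := by simp [B4]

lemma B4_comm (v w : Fin 4 → ℝ) : B4 v w = B4 w v := by unfold B4; ring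

lemma B4_sub_smul (v w z : Fin 4 → ℝ) (k : ℝ) : B4 (v - k • w) z = B4 v z - k * B4 w z := by
  simp only [B4, Pi.sub_apply, Pi.smul_apply, smul_eq_mul]; ring

/-- contraction of an array with two vectors -/
def contr (W : Fin 4 → Fin 4 → ℝ) (a b : Fin 4 → ℝ) : ℝ := B4 (fun i => B4 (W i) b) a

lemma contr_wedge (v w a b : Fin 4 → ℝ) :
    contr (wedge v w) a b = B4 v a * B4 w b - B4 w a * B4 v b := by
  simp only [contr, wedge, B4]; ring

lemma contr_lin (k l : ℝ) (V W : Fin 4 → Fin 4 → ℝ) (a b : Fin 4 → ℝ) :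
    contr (k • V + l • W) a b = k * contr V a b + l * contr W a b := by
  simp only [contr, B4, Pi.add_apply, Pi.smul_apply, smul_eq_mul]; ring

lemma pds_pdt_gaussMap
    (I₁ I₂ : Set ℝ) (hI₁ : IsOpen I₁) (hI₂ : IsOpen I₂)
    (α β : ℝ → Fin 4 → ℝ)
    (hα : ContDiffOn ℝ (⊤ : ℕ∞) α I₁) (hβ : ContDiffOn ℝ (⊤ : ℕ∞) β I₂)
    (hneg : ∀ s ∈ I₁, ∀ t ∈ I₂, B4 (deriv α s) (deriv β t) < 0)
    (hβnull : ∀ t ∈ I₂, B4 (deriv β t) (deriv β t) = 0)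
    (hαnull : ∀ t ∈ I₁, B4 (deriv α t) (deriv α t) = 0)
    (s : ℝ) (hs : s ∈ I₁) (t : ℝ) (ht : t ∈ I₂) :
    pds (pdt (gaussMap α β)) s t =
      (-(1 / B4 (deriv α s) (deriv β t))) • wedge (eta1 α β s t) (eta2 α β s t) +
      (B4 (eta1 α β s t) (eta2 α β s t) / B4 (deriv α s) (deriv β t) ^ 2) •
        wedge (deriv α s) (deriv β t) := by
  have hb := hasDerivAt_deriv_of hI₂ hβ ht
  have ha := hasDerivAt_deriv_of hI₁ hα hs
  have key : ∀ u ∈ I₁, pdt (gaussMap α β) u t =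
      (-(B4 (deriv α u) (deriv β t))⁻¹) • wedge (deriv α u) (deriv (deriv β) t) +
      (B4 (deriv α u) (deriv (deriv β) t) * ((B4 (deriv α u) (deriv β t))⁻¹) ^ 2) •
        wedge (deriv α u) (deriv β t) := by
    intro u hu
    have hc := hneg u hu t ht
    have h1 := (hasDerivAt_B4 (hasDerivAt_const t (deriv α u)) hb).neg.inv
      (by simpa using hc.ne)
    have h2 := h1.smul (hasDerivAt_wedge (hasDerivAt_const t (deriv α u)) hb)
    have h3 := h2.congr_of_eventuallyEq (f₁ := fun v => gaussMap α β u v)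
      (Filter.Eventually.of_forall fun v => by simp [gaussMap, msq])
    unfold pdt
    rw [h3.deriv]
    funext i j
    have := hc.ne
    simp [B4_zero_left, wedge]
    field_simp
    simp
  have hc := (hneg s hs t ht).ne
  have hA := (hasDerivAt_B4 ha (hasDerivAt_const s (deriv β t))).inv hc
  have hQ := hasDerivAt_B4 ha (hasDerivAt_const s (deriv (deriv β) t))
  have hW1 := hasDerivAt_wedge ha (hasDerivAt_const s (deriv (deriv β) t))
  have hW2 := hasDerivAt_wedge ha (hasDerivAt_const s (deriv β t))
  have hD := (hA.neg.smul hW1).add ((hQ.mul (hA.pow 2)).smul hW2)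
  have hE := hD.congr_of_eventuallyEq (f₁ := fun u => pdt (gaussMap α β) u t) (by
    filter_upwards [hI₁.mem_nhds hs] with u hu
    rw [key u hu]
    rfl)
  have hK : B4 (eta1 α β s t) (eta2 α β s t) = B4 (deriv (deriv α) s) (deriv (deriv β) t)
      - B4 (deriv (deriv α) s) (deriv β t) * B4 (deriv α s) (deriv (deriv β) t) /
        B4 (deriv α s) (deriv β t) := by
    unfold eta1 eta2
    rw [B4_sub_smul, B4_comm _ (_ - _), B4_comm _ (_ - _), B4_sub_smul, B4_sub_smul,
      B4_comm (deriv (deriv β) t), B4_comm (deriv (deriv β) t), B4_comm (deriv β t),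
      B4_comm (deriv β t)]
    field_simp
    ring
  unfold pds
  rw [hE.deriv, hK]
  unfold eta1 eta2
  rw [B4_comm (deriv (deriv β) t)]
  funext i j
  simp [B4_zero_right, wedge]
  field_simp
  ring

/-- Characterization of harmonic Gauss map: at each point, `∂²ν/∂s∂t = 0` iff
both `B(η₁,η₂) = 0` (vanishing Gaussian curvature) and `η₁ ∧ η₂ = 0` (vanishing
normal curvature). -/
theorem harmonic_gaussMap_iff
    (I₁ I₂ : Set ℝ) (hI₁ : IsOpen I₁) (hI₂ : IsOpen I₂)
    (hI₁' : I₁.OrdConnected) (hI₂' : I₂.OrdConnected)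
    (α β : ℝ → Fin 4 → ℝ)
    (hα : ContDiffOn ℝ (⊤ : ℕ∞) α I₁) (hβ : ContDiffOn ℝ (⊤ : ℕ∞) β I₂)
    (hαnull : ∀ s ∈ I₁, B4 (deriv α s) (deriv α s) = 0)
    (hβnull : ∀ t ∈ I₂, B4 (deriv β t) (deriv β t) = 0)
    (hneg : ∀ s ∈ I₁, ∀ t ∈ I₂, B4 (deriv α s) (deriv β t) < 0)
    :
    ∀ s ∈ I₁, ∀ t ∈ I₂,
      (pds (pdt (gaussMap α β)) s t = 0 ↔
        (B4 (eta1 α β s t) (eta2 α β s t) = 0 ∧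
          wedge (eta1 α β s t) (eta2 α β s t) = 0)) := by
  intro s hs t ht
  rw [pds_pdt_gaussMap I₁ I₂ hI₁ hI₂ α β hα hβ hneg hβnull hαnull s hs t ht]
  have hc := (hneg s hs t ht).ne
  have ha := hasDerivAt_deriv_of hI₁ hα hs
  have hpa : B4 (deriv (deriv α) s) (deriv α s) = 0 := by
    have h0 : HasDerivAt (fun u => B4 (deriv α u) (deriv α u)) 0 s := by
      refine (hasDerivAt_const s (0 : ℝ)).congr_of_eventuallyEq ?_
      filter_upwards [hI₁.mem_nhds hs] with u hu
      exact hαnull u hu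
    have h1 := (hasDerivAt_B4 ha ha).unique h0
    rw [B4_comm (deriv α s)] at h1
    linarith
  have e1 : B4 (eta1 α β s t) (deriv α s) = 0 := by
    unfold eta1
    rw [B4_sub_smul, hpa, hαnull s hs]; ring
  have e2 : B4 (eta1 α β s t) (deriv β t) = 0 := by
    unfold eta1
    rw [B4_sub_smul]; field_simp; ring
  constructor
  · intro h
    have hK : B4 (eta1 α β s t) (eta2 α β s t) = 0 := by
      have h1 := congrArg (fun W => contr W (deriv α s) (deriv β t)) h
      simp only [contr_lin, contr_wedge, e1, e2, hαnull s hs, hβnull t ht] at h1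
      rw [B4_comm (deriv β t)] at h1
      have h2 : contr 0 (deriv α s) (deriv β t) = 0 := by simp [contr, B4]
      rw [h2] at h1
      simp only [zero_mul, mul_zero, sub_self, zero_add, zero_sub] at h1
      field_simp at h1
      simpa using h1
    refine ⟨hK, ?_⟩
    rw [hK] at h
    simpa [hc] using h
  · rintro ⟨h1, h2⟩
    simp [h1, h2]
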